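/- Let C be a regular, irreducible curve that is projective over a field k, with function field F = k(C), arithmetic genus t, and a k-rational point O. For every integer d ≥ 3t + 1, the tame symbol induces an isomorphism K₂(F) / F_{d−1} ≅ ∐_{O ≠ P ∈ C_{≥d}} k(P)^*. -/

import Mathlib

open scoped TensorProduct

noncomputable section

/-- The set of Steinberg relations in `Fˣ ⊗_ℤ Fˣ` (written additively):
the elements `a ⊗ b` with `a + b = 1` in `F`. -/
def SteinbergSet (F : Type*) [Field F] :
    Set (TensorProduct ℤ (Additive Fˣ) (Additive Fˣ)) :=
  { x | ∃ a b : Fˣ, (a : F) + (b : F) = 1 ∧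
      x = Additive.ofMul a ⊗ₜ[ℤ] Additive.ofMul b }

/-- Milnor's `K₂` of a field, via Matsumoto's presentation. -/
abbrev K2 (F : Type*) [Field F] :=
  (TensorProduct ℤ (Additive Fˣ) (Additive Fˣ)) ⧸
    Submodule.span ℤ (SteinbergSet F)

/-- The symbol `{f, g}` in `K₂(F)`. -/
def symbol {F : Type*} [Field F] (f g : Fˣ) : K2 F :=
  Submodule.Quotient.mk (Additive.ofMul f ⊗ₜ[ℤ] Additive.ofMul g)

/-- The degree of a divisor `D` on the curve: `∑_P deg(P) · D(P)`,
where `deg P = [k(P) : k]`. -/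
def divDeg (k : Type*) [Field k] {Pt : Type*} (res : Pt → Type*)
    [∀ P, Field (res P)] [∀ P, Algebra k (res P)] (D : Pt →₀ ℤ) : ℤ :=
  ∑ᶠ P, (Module.finrank k (res P) : ℤ) * D P

/-- Axioms for a regular, irreducible curve `C`, projective over a field `k`, with
`H⁰(C, O_C) = k`, presented through: its function field `F = k(C)`, its set `Pt` of
closed points, the residue fields `res P = k(P)`, the normalized valuations `ord P`,
the evaluation maps `ev P` (evaluation at `P` of functions regular at `P`), the
Riemann-Roch spaces `L D = H⁰(C, O_C(D))`, and the arithmetic genus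
`t = dim_k H¹(C, O_C)`, characterized by the Riemann-Roch relations. -/
structure IsProjCurve (k F : Type*) [Field k] [Field F] [Algebra k F]
    {Pt : Type*} (res : Pt → Type*) [∀ P, Field (res P)] [∀ P, Algebra k (res P)]
    (ord : Pt → F → ℤ) (ev : ∀ P, F → res P)
    (L : (Pt →₀ ℤ) → Submodule k F) (t : ℕ) : Prop where
  finiteDimensional_res : ∀ P, FiniteDimensional k (res P)
  ord_mul : ∀ P (f g : F), f ≠ 0 → g ≠ 0 → ord P (f * g) = ord P f + ord P g
  ord_add : ∀ P (f g : F), f ≠ 0 → g ≠ 0 → f + g ≠ 0 →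
      min (ord P f) (ord P g) ≤ ord P (f + g)
  ord_algebraMap : ∀ P (c : k), c ≠ 0 → ord P (algebraMap k F c) = 0
  ord_uniformizer : ∀ P, ∃ f : F, f ≠ 0 ∧ ord P f = 1
  ord_separates : ∀ P Q, (∀ f : F, ord P f = ord Q f) → P = Q
  support_finite : ∀ f : F, f ≠ 0 → {P | ord P f ≠ 0}.Finite
  degree_formula : ∀ f : F, f ≠ 0 →
      ∑ᶠ P, (Module.finrank k (res P) : ℤ) * ord P f = 0
  ev_zero : ∀ P, ev P 0 = 0
  ev_one : ∀ P, ev P 1 = 1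
  ev_add : ∀ P (f g : F), f ≠ 0 → g ≠ 0 → 0 ≤ ord P f → 0 ≤ ord P g →
      ev P (f + g) = ev P f + ev P g
  ev_mul : ∀ P (f g : F), f ≠ 0 → g ≠ 0 → 0 ≤ ord P f → 0 ≤ ord P g →
      ev P (f * g) = ev P f * ev P g
  ev_algebraMap : ∀ P (c : k), ev P (algebraMap k F c) = algebraMap k (res P) c
  ev_eq_zero_iff : ∀ P (f : F), f ≠ 0 → 0 ≤ ord P f → (ev P f = 0 ↔ 0 < ord P f)
  ev_surjective : ∀ P (y : res P), ∃ f : F, f ≠ 0 ∧ 0 ≤ ord P f ∧ ev P f = y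
  mem_L : ∀ (D : Pt →₀ ℤ) (f : F), f ∈ L D ↔ (f ≠ 0 → ∀ P, 0 ≤ D P + ord P f)
  finiteDimensional_L : ∀ D, FiniteDimensional k (L D)
  global_sections : ∀ f : F, f ∈ L 0 ↔ ∃ c : k, algebraMap k F c = f
  rr_ineq : ∀ D : Pt →₀ ℤ,
      divDeg k res D + 1 - t ≤ (Module.finrank k (L D) : ℤ)
  rr_eq : ∀ D : Pt →₀ ℤ, 2 * (t : ℤ) - 2 < divDeg k res D →
      (Module.finrank k (L D) : ℤ) = divDeg k res D + 1 - t

/-- `T` is the tame symbol `K₂(F) → ∐_{P} k(P)^*`: it is determined by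
`T_P({f,g}) = (-1)^{ord_P(f)·ord_P(g)} (f^{ord_P(g)} / g^{ord_P(f)})(P)`. -/
def IsTameSymbol {F : Type*} [Field F] {Pt : Type*} {res : Pt → Type*}
    [∀ P, Field (res P)]
    (ord : Pt → F → ℤ) (ev : ∀ P, F → res P)
    (T : K2 F →+ Π₀ P : Pt, Additive ((res P)ˣ)) : Prop :=
  ∀ (f g : Fˣ) (P : Pt),
    ((Additive.toMul (T (symbol f g) P) : (res P)ˣ) : res P) =
      ev P (((-1 : Fˣ) ^ (ord P (f : F) * ord P (g : F)) *
        f ^ (ord P (g : F)) * g ^ (-ord P (f : F)) : Fˣ) : F)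

/-- `F_d`: the subgroup of `K₂(F)` generated by the symbols `{f, g}` with
`|(f)| ∪ |(g)| ⊆ C_{≤ d}`. -/
def Fsub (k : Type*) [Field k] {F : Type*} [Field F] {Pt : Type*} (res : Pt → Type*)
    [∀ P, Field (res P)] [∀ P, Algebra k (res P)]
    (ord : Pt → F → ℤ) (d : ℕ) : AddSubgroup (K2 F) :=
  AddSubgroup.closure
    { x | ∃ f g : Fˣ,
        (∀ P, ord P (f : F) ≠ 0 → Module.finrank k (res P) ≤ d) ∧
        (∀ P, ord P (g : F) ≠ 0 → Module.finrank k (res P) ≤ d) ∧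
        x = symbol f g }

section Symbols

variable {F : Type*} [Field F]

theorem symbol_mul_left (f g h : Fˣ) : symbol (f * g) h = symbol f h + symbol g h := by
  simp only [symbol, ofMul_mul, TensorProduct.add_tmul, Submodule.Quotient.mk_add]

theorem symbol_mul_right (f g h : Fˣ) : symbol f (g * h) = symbol f g + symbol f h := by
  simp only [symbol, ofMul_mul, TensorProduct.tmul_add, Submodule.Quotient.mk_add]

theorem symbol_one_left (h : Fˣ) : symbol 1 h = 0 := by
  simpa using symbol_mul_left 1 1 h

theorem symbol_one_right (h : Fˣ) : symbol h 1 = 0 := by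
  simpa using symbol_mul_right h 1 1

theorem symbol_inv_left (f h : Fˣ) : symbol f⁻¹ h = -symbol f h := by
  rw [eq_neg_iff_add_eq_zero, ← symbol_mul_left, inv_mul_cancel, symbol_one_left]

theorem symbol_inv_right (f h : Fˣ) : symbol f h⁻¹ = -symbol f h := by
  rw [eq_neg_iff_add_eq_zero, ← symbol_mul_right, inv_mul_cancel, symbol_one_right]

/-- The Steinberg relation. -/
theorem symbol_eq_zero_of_add_eq_one {a b : Fˣ} (h : (a : F) + b = 1) : symbol a b = 0 :=
  (Submodule.Quotient.mk_eq_zero _).2 (Submodule.subset_span ⟨a, b, h, rfl⟩)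

theorem symbol_self_neg (f : Fˣ) : symbol f (-f) = 0 := by
  by_cases hf : f = 1
  · rw [hf, symbol_one_left]
  have h₁ : (1 : F) - f ≠ 0 := fun h => hf (Units.ext (by simpa using (sub_eq_zero.1 h).symm))
  have h₂ : (1 : F) - ((f⁻¹ : Fˣ) : F) ≠ 0 := fun h =>
    hf (inv_eq_one.1 (Units.ext (by simpa using (sub_eq_zero.1 h).symm)))
  have e : -f = Units.mk0 _ h₁ * (Units.mk0 _ h₂)⁻¹ := by
    rw [eq_mul_inv_iff_mul_eq]
    ext
    simp [mul_sub]
  rw [e, symbol_mul_right, symbol_inv_right, symbol_eq_zero_of_add_eq_one (a := f) (by simp),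
    ← symbol_inv_left, symbol_eq_zero_of_add_eq_one (a := f⁻¹) (by simp), add_zero]

theorem symbol_self (f : Fˣ) : symbol f f = symbol f (-1) := by
  have h := symbol_mul_right f (-1) (-f)
  rwa [symbol_self_neg, add_zero, neg_mul_neg, one_mul] at h

theorem symbol_swap (f g : Fˣ) : symbol f g = -symbol g f := by
  have h := symbol_self_neg (f * g)
  have e₁ : -(f * g) = f * -g := by simp
  have e₂ : f * -g = -f * g := by simp
  rw [e₁, symbol_mul_left, symbol_mul_right g f, symbol_self_neg, e₂, symbol_mul_right f,
    symbol_self_neg, zero_add, add_zero] at h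
  exact eq_neg_of_add_eq_zero_left h

end Symbols

section Curve

variable {k F : Type*} [Field k] [Field F] [Algebra k F]
  {Pt : Type*} {res : Pt → Type*} [∀ P, Field (res P)] [∀ P, Algebra k (res P)]
  {ord : Pt → F → ℤ} {ev : ∀ P, F → res P}
  {L : (Pt →₀ ℤ) → Submodule k F} {t : ℕ}

theorem divDeg_support_finite (D : Pt →₀ ℤ) :
    (Function.support fun P => (Module.finrank k (res P) : ℤ) * D P).Finite :=
  D.hasFiniteSupport.subset fun _ h => right_ne_zero_of_mul h

theorem divDeg_add (D E : Pt →₀ ℤ) :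
    divDeg k res (D + E) = divDeg k res D + divDeg k res E := by
  simp only [divDeg, Finsupp.add_apply, mul_add]
  exact finsum_add_distrib (divDeg_support_finite D) (divDeg_support_finite E)

theorem divDeg_sub (D E : Pt →₀ ℤ) :
    divDeg k res (D - E) = divDeg k res D - divDeg k res E := by
  rw [eq_sub_iff_add_eq, ← divDeg_add, sub_add_cancel]

theorem divDeg_single (P : Pt) (n : ℤ) :
    divDeg k res (Finsupp.single P n) = Module.finrank k (res P) * n := by
  classical
  rw [divDeg, finsum_eq_single _ P, Finsupp.single_eq_same]
  intro Q hQ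
  rw [Finsupp.single_eq_of_ne hQ, mul_zero]

theorem divDeg_nonneg {D : Pt →₀ ℤ} (hD : 0 ≤ D) : 0 ≤ divDeg k res D :=
  finsum_nonneg fun P => mul_nonneg (Int.natCast_nonneg _) (hD P)

theorem finrank_mul_le_divDeg {D : Pt →₀ ℤ} (hD : 0 ≤ D) (P : Pt) :
    (Module.finrank k (res P) : ℤ) * D P ≤ divDeg k res D := by
  have h : 0 ≤ divDeg k res (D - Finsupp.single P (D P)) := by
    refine divDeg_nonneg fun Q => ?_
    by_cases hQ : Q = P
    · simp [hQ]
    · simpa [Finsupp.single_eq_of_ne hQ] using hD Q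
  rw [divDeg_sub, divDeg_single] at h
  linarith

/-- A point in the support of an effective divisor has degree at most that of the divisor. -/
theorem finrank_le_divDeg {D : Pt →₀ ℤ} (hD : 0 ≤ D) {P : Pt} (hP : D P ≠ 0) :
    (Module.finrank k (res P) : ℤ) ≤ divDeg k res D := by
  have h₁ : 1 ≤ D P := by have : 0 ≤ D P := hD P; omega
  have h₂ : (0 : ℤ) ≤ Module.finrank k (res P) := Int.natCast_nonneg _
  nlinarith [finrank_mul_le_divDeg (k := k) (res := res) hD P]

/-- An effective divisor of degree `> t` whose points have degree at most `e`, where `2 * t ≤ e`,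
has an effective part of degree in the interval `(t, e]`. -/
theorem exists_le_divDeg_mem_Ioc (hpos : ∀ P, 0 < Module.finrank k (res P)) {t e : ℕ}
    (hte : 2 * t ≤ e) {Z : Pt →₀ ℤ} (hZ : 0 ≤ Z)
    (hZe : ∀ Q, Z Q ≠ 0 → Module.finrank k (res Q) ≤ e) (hZt : (t : ℤ) < divDeg k res Z) :
    ∃ A : Pt →₀ ℤ, 0 ≤ A ∧ A ≤ Z ∧ (t : ℤ) < divDeg k res A ∧ divDeg k res A ≤ e := by
  classical
  have hex : ∃ a : ℕ, ∃ A : Pt →₀ ℤ,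
      0 ≤ A ∧ A ≤ Z ∧ (t : ℤ) < divDeg k res A ∧ divDeg k res A = a :=
    ⟨(divDeg k res Z).toNat, Z, hZ, le_rfl, hZt, (Int.toNat_of_nonneg (by omega)).symm⟩
  obtain ⟨A, hA, hAZ, hAt, ha⟩ := Nat.find_spec hex
  refine ⟨A, hA, hAZ, hAt, ?_⟩
  have hmin : ∀ B : Pt →₀ ℤ, 0 ≤ B → B ≤ Z → (t : ℤ) < divDeg k res B →
      divDeg k res A ≤ divDeg k res B := by
    intro B hB hBZ hBt
    have := Nat.find_min' hex (m := (divDeg k res B).toNat)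
      ⟨B, hB, hBZ, hBt, (Int.toNat_of_nonneg (by omega)).symm⟩
    omega
  by_contra! hlt
  obtain ⟨Q, hQ⟩ : ∃ Q, A Q ≠ 0 := by
    by_contra! h
    have : A = 0 := Finsupp.ext h
    rw [this] at hAt
    simp only [divDeg, Finsupp.coe_zero, Pi.zero_apply, mul_zero, finsum_zero] at hAt
    omega
  have hAQ : 1 ≤ A Q := by have : 0 ≤ A Q := hA Q; omega
  have hZQ : A Q ≤ Z Q := hAZ Q
  have hQe := hZe Q (by omega)
  have hQpos := hpos Q
  have hrem : divDeg k res (A - Finsupp.single Q 1) ≤ t := by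
    by_contra! hgt
    have := hmin _ (fun R => by
      by_cases hR : R = Q
      · simpa [hR] using hAQ
      · simpa [Finsupp.single_eq_of_ne hR] using hA R) (fun R => by
      by_cases hR : R = Q
      · simp only [hR, Finsupp.coe_sub, Pi.sub_apply, Finsupp.single_eq_same]
        omega
      · simpa [Finsupp.single_eq_of_ne hR] using hAZ R) hgt
    rw [divDeg_sub, divDeg_single] at this
    omega
  rw [divDeg_sub, divDeg_single] at hrem
  have := hmin (Finsupp.single Q 1) (by simp) (fun R => by
    by_cases hR : R = Q
    · simp only [hR, Finsupp.single_eq_same]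
      omega
    · simpa [Finsupp.single_eq_of_ne hR] using hZ R) (by rw [divDeg_single]; omega)
  rw [divDeg_single] at this
  omega

/-- The points of degree less than `n`, together with `O`. -/
def IsLow (k : Type*) [Field k] {Pt : Type*} (res : Pt → Type*)
    [∀ P, Field (res P)] [∀ P, Algebra k (res P)] (O : Pt) (n : ℕ) (P : Pt) : Prop :=
  P = O ∨ Module.finrank k (res P) < n

namespace IsProjCurve

theorem finrank_pos (hC : IsProjCurve k F res ord ev L t) (P : Pt) :
    0 < Module.finrank k (res P) :=
  haveI := hC.finiteDimensional_res P
  Module.finrank_pos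

/-- The valuation at `P` as a group homomorphism. -/
def ordHom (hC : IsProjCurve k F res ord ev L t) (P : Pt) : Fˣ →* Multiplicative ℤ :=
  MonoidHom.mk' (fun f => Multiplicative.ofAdd (ord P f)) fun f g => by
    rw [← ofAdd_add, ← hC.ord_mul P f g f.ne_zero g.ne_zero, Units.val_mul]

theorem ord_unit_one (hC : IsProjCurve k F res ord ev L t) (P : Pt) :
    ord P ((1 : Fˣ) : F) = 0 :=
  congrArg Multiplicative.toAdd (hC.ordHom P).map_one

theorem ord_unit_mul (hC : IsProjCurve k F res ord ev L t) (P : Pt) (f g : Fˣ) :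
    ord P ((f * g : Fˣ) : F) = ord P (f : F) + ord P (g : F) :=
  congrArg Multiplicative.toAdd ((hC.ordHom P).map_mul f g)

theorem ord_unit_inv (hC : IsProjCurve k F res ord ev L t) (P : Pt) (f : Fˣ) :
    ord P ((f⁻¹ : Fˣ) : F) = -ord P (f : F) :=
  congrArg Multiplicative.toAdd ((hC.ordHom P).map_inv f)

theorem ord_unit_zpow (hC : IsProjCurve k F res ord ev L t) (P : Pt) (f : Fˣ) (n : ℤ) :
    ord P ((f ^ n : Fˣ) : F) = n * ord P (f : F) := by
  have h := congrArg Multiplicative.toAdd ((hC.ordHom P).map_zpow f n)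
  rwa [toAdd_zpow, smul_eq_mul] at h

theorem ord_unit_prod (hC : IsProjCurve k F res ord ev L t) (P : Pt) {ι : Type*}
    (s : Finset ι) (f : ι → Fˣ) :
    ord P ((∏ i ∈ s, f i : Fˣ) : F) = ∑ i ∈ s, ord P (f i : F) := by
  have h := congrArg Multiplicative.toAdd (map_prod (hC.ordHom P) f s)
  rwa [toAdd_prod] at h

theorem ord_neg_one (hC : IsProjCurve k F res ord ev L t) (P : Pt) :
    ord P ((-1 : Fˣ) : F) = 0 := by
  simpa using hC.ord_algebraMap P (-1) (by simp)

theorem ev_unit_mul (hC : IsProjCurve k F res ord ev L t) {P : Pt} {f g : Fˣ}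
    (hf : ord P (f : F) = 0) (hg : ord P (g : F) = 0) :
    ev P ((f * g : Fˣ) : F) = ev P (f : F) * ev P (g : F) := by
  rw [Units.val_mul, hC.ev_mul P f g f.ne_zero g.ne_zero hf.ge hg.ge]

theorem ev_unit_ne_zero (hC : IsProjCurve k F res ord ev L t) {P : Pt} {f : Fˣ}
    (hf : ord P (f : F) = 0) : ev P (f : F) ≠ 0 := fun h =>
  absurd ((hC.ev_eq_zero_iff P f f.ne_zero hf.ge).1 h) (by omega)

theorem ev_unit_inv (hC : IsProjCurve k F res ord ev L t) {P : Pt} {f : Fˣ}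
    (hf : ord P (f : F) = 0) : ev P ((f⁻¹ : Fˣ) : F) = (ev P (f : F))⁻¹ := by
  have h := hC.ev_unit_mul (f := f⁻¹) (g := f) (P := P) (by rw [hC.ord_unit_inv, hf, neg_zero]) hf
  rw [inv_mul_cancel, Units.val_one, hC.ev_one] at h
  exact eq_inv_of_mul_eq_one_left h.symm

/-- The divisor of a nonzero function. -/
def dv (hC : IsProjCurve k F res ord ev L t) (f : Fˣ) : Pt →₀ ℤ :=
  Finsupp.ofSupportFinite (fun P => ord P (f : F)) (hC.support_finite f f.ne_zero)

theorem dv_apply (hC : IsProjCurve k F res ord ev L t) (f : Fˣ) (P : Pt) :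
    hC.dv f P = ord P (f : F) := rfl

theorem divDeg_dv (hC : IsProjCurve k F res ord ev L t) (f : Fˣ) :
    divDeg k res (hC.dv f) = 0 :=
  hC.degree_formula f f.ne_zero

theorem mem_L_unit (hC : IsProjCurve k F res ord ev L t) {D : Pt →₀ ℤ} {f : Fˣ} :
    (f : F) ∈ L D ↔ 0 ≤ hC.dv f + D := by
  rw [hC.mem_L]
  refine ⟨fun h P => ?_, fun h _ P => ?_⟩
  · have := h f.ne_zero P
    simp only [Finsupp.coe_zero, Pi.zero_apply, Finsupp.add_apply, hC.dv_apply]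
    omega
  · have : 0 ≤ (hC.dv f + D) P := h P
    rw [Finsupp.add_apply, hC.dv_apply] at this
    omega

theorem mul_mem_L (hC : IsProjCurve k F res ord ev L t) {D E : Pt →₀ ℤ} {f g : Fˣ}
    (hf : (f : F) ∈ L D) (hg : (g : F) ∈ L E) : ((f * g : Fˣ) : F) ∈ L (D + E) := by
  rw [hC.mem_L_unit] at hf hg ⊢
  intro P
  have h₁ : 0 ≤ (hC.dv f + D) P := hf P
  have h₂ : 0 ≤ (hC.dv g + E) P := hg P
  simp only [Finsupp.coe_zero, Pi.zero_apply, Finsupp.add_apply, hC.dv_apply,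
    hC.ord_unit_mul] at *
  omega

theorem L_mono (hC : IsProjCurve k F res ord ev L t) {D E : Pt →₀ ℤ} (h : D ≤ E) :
    L D ≤ L E := by
  intro f hf
  rw [hC.mem_L] at hf ⊢
  intro h0 P
  have := hf h0 P
  have := h P
  omega

theorem one_mem_L (hC : IsProjCurve k F res ord ev L t) {D : Pt →₀ ℤ} (h : 0 ≤ D) :
    ((1 : Fˣ) : F) ∈ L D :=
  hC.L_mono h ((hC.global_sections _).2 ⟨1, by simp⟩)

/-- Every divisor class of degree `0` is represented by `E - t • O` with `E` effective of
degree `t`. -/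
theorem exists_unit_dv_eq (hC : IsProjCurve k F res ord ev L t) {O : Pt}
    (hO : Module.finrank k (res O) = 1) (A : Pt →₀ ℤ) :
    ∃ (u : Fˣ) (E : Pt →₀ ℤ), 0 ≤ E ∧ divDeg k res E = t ∧
      hC.dv u = A + E - Finsupp.single O (divDeg k res A + t) := by
  have h := hC.rr_ineq (Finsupp.single O (divDeg k res A + t) - A)
  rw [divDeg_sub, divDeg_single, hO] at h
  have hpos : 0 < Module.finrank k (L (Finsupp.single O (divDeg k res A + t) - A)) := by
    push_cast at h
    omega
  have := Module.nontrivial_of_finrank_pos hpos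
  obtain ⟨⟨u, hu⟩, hu0⟩ := exists_ne (0 : L (Finsupp.single O (divDeg k res A + t) - A))
  have hu0 : u ≠ 0 := fun h => hu0 (Subtype.ext h)
  lift u to Fˣ using hu0.isUnit
  refine ⟨u, hC.dv u + (Finsupp.single O (divDeg k res A + t) - A), hC.mem_L_unit.1 hu, ?_, ?_⟩
  · rw [divDeg_add, hC.divDeg_dv, divDeg_sub, divDeg_single, hO]
    push_cast
    ring
  · abel

theorem isLow_of_mem_L (hC : IsProjCurve k F res ord ev L t) {O : Pt}
    (hO : Module.finrank k (res O) = 1) {n e : ℕ} (hne : n < e) {f : Fˣ}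
    (hf : (f : F) ∈ L (Finsupp.single O n)) {P : Pt} (hP : ord P (f : F) ≠ 0) :
    IsLow k res O e P := by
  by_cases hPO : P = O
  · exact Or.inl hPO
  refine Or.inr ?_
  have h := finrank_le_divDeg (k := k) (res := res) (hC.mem_L_unit.1 hf) (P := P) (by
    rwa [Finsupp.add_apply, Finsupp.single_eq_of_ne hPO, add_zero])
  rw [divDeg_add, hC.divDeg_dv, divDeg_single, hO] at h
  push_cast at h
  omega

/-- Evaluation at `P` as a linear map on the functions with poles only at `O`. -/
def evL (hC : IsProjCurve k F res ord ev L t) {O P : Pt} (hP : P ≠ O) (n : ℕ) :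
    L (Finsupp.single O n) →ₗ[k] res P where
  toFun f := ev P f
  map_add' f g := by
    have hreg : ∀ h : L (Finsupp.single O (n : ℤ)), (h : F) ≠ 0 → 0 ≤ ord P (h : F) := by
      intro h h0
      simpa [Finsupp.single_eq_of_ne hP] using (hC.mem_L _ _).1 h.2 h0 P
    by_cases hf : (f : F) = 0
    · simp [hf, hC.ev_zero]
    by_cases hg : (g : F) = 0
    · simp [hg, hC.ev_zero]
    exact hC.ev_add P f g hf hg (hreg f hf) (hreg g hg)
  map_smul' c f := by
    by_cases hc : c = 0
    · simp [hc, hC.ev_zero]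
    by_cases hf : (f : F) = 0
    · simp [hf, hC.ev_zero]
    have hf' : 0 ≤ ord P (f : F) := by
      simpa [Finsupp.single_eq_of_ne hP] using (hC.mem_L _ _).1 f.2 hf P
    simp only [Submodule.coe_smul, Algebra.smul_def, RingHom.id_apply]
    rw [hC.ev_mul P _ _ (by simpa using hc) hf (hC.ord_algebraMap P c hc).ge hf',
      hC.ev_algebraMap]

theorem evL_apply (hC : IsProjCurve k F res ord ev L t) {O P : Pt} (hP : P ≠ O) (n : ℕ)
    (f : L (Finsupp.single O n)) : hC.evL hP n f = ev P (f : F) := rfl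

theorem le_finrank_L (hC : IsProjCurve k F res ord ev L t) {O : Pt}
    (hO : Module.finrank k (res O) = 1) (n : ℕ) :
    n + 1 ≤ Module.finrank k (L (Finsupp.single O (n : ℤ))) + t := by
  have := hC.rr_ineq (Finsupp.single O n)
  rw [divDeg_single, hO] at this
  push_cast at this
  omega

/-- The units with divisor supported on points of degree less than `n` and `O`. -/
def lowUnits (hC : IsProjCurve k F res ord ev L t) (O : Pt) (n : ℕ) : Subgroup Fˣ where
  carrier := {f | ∀ P, ord P (f : F) ≠ 0 → IsLow k res O n P}
  one_mem' P h := absurd (hC.ord_unit_one P) h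
  mul_mem' {f g} hf hg P h := by
    rw [hC.ord_unit_mul] at h
    by_cases hf0 : ord P (f : F) = 0
    · exact hg P (by omega)
    · exact hf P hf0
  inv_mem' {f} hf P h := hf P (by rw [hC.ord_unit_inv] at h; omega)

theorem ord_eq_zero_of_mem_lowUnits (hC : IsProjCurve k F res ord ev L t) {O P : Pt} {n : ℕ}
    {f : Fˣ} (hf : f ∈ hC.lowUnits O n) (hP : ¬ IsLow k res O n P) : ord P (f : F) = 0 :=
  by_contra fun h => hP (hf P h)

theorem neg_one_mem_lowUnits (hC : IsProjCurve k F res ord ev L t) (O : Pt) (n : ℕ) :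
    -1 ∈ hC.lowUnits O n := fun P h => absurd (hC.ord_neg_one P) h

theorem neg_mem_lowUnits (hC : IsProjCurve k F res ord ev L t) {O : Pt} {n : ℕ} {f : Fˣ}
    (hf : f ∈ hC.lowUnits O n) : -f ∈ hC.lowUnits O n := by
  rw [← neg_one_mul]
  exact mul_mem (hC.neg_one_mem_lowUnits O n) hf

/-- The subgroup of `K₂` generated by the symbols of elements of `lowUnits`. -/
def lowSymbols (hC : IsProjCurve k F res ord ev L t) (O : Pt) (n : ℕ) : AddSubgroup (K2 F) :=
  AddSubgroup.closure {x | ∃ f ∈ hC.lowUnits O n, ∃ g ∈ hC.lowUnits O n, x = symbol f g}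

theorem symbol_mem_lowSymbols (hC : IsProjCurve k F res ord ev L t) {O : Pt} {n : ℕ} {f g : Fˣ}
    (hf : f ∈ hC.lowUnits O n) (hg : g ∈ hC.lowUnits O n) : symbol f g ∈ hC.lowSymbols O n :=
  AddSubgroup.subset_closure ⟨f, hf, g, hg, rfl⟩

theorem not_isLow_finrank {O P : Pt} (hP : P ≠ O) :
    ¬ IsLow k res O (Module.finrank k (res P)) P := fun h =>
  h.elim hP (lt_irrefl _)

theorem mem_lowUnits_of_mem_L (hC : IsProjCurve k F res ord ev L t) {O : Pt}
    (hO : Module.finrank k (res O) = 1) {n e : ℕ} (hne : n < e) {f : Fˣ}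
    (hf : (f : F) ∈ L (Finsupp.single O n)) : f ∈ hC.lowUnits O e :=
  fun _ => hC.isLow_of_mem_L hO hne hf

theorem L_single_mono (hC : IsProjCurve k F res ord ev L t) (O : Pt) {n m : ℕ} (h : n ≤ m) :
    L (Finsupp.single O (n : ℤ)) ≤ L (Finsupp.single O (m : ℤ)) :=
  hC.L_mono (Finsupp.single_mono (by exact_mod_cast h))

theorem mul_mem_L_single (hC : IsProjCurve k F res ord ev L t) {O : Pt} {n m : ℕ} {f g : Fˣ}
    (hf : (f : F) ∈ L (Finsupp.single O n)) (hg : (g : F) ∈ L (Finsupp.single O m)) {N : ℕ}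
    (hN : n + m ≤ N) : ((f * g : Fˣ) : F) ∈ L (Finsupp.single O N) := by
  refine hC.L_single_mono O hN ?_
  have := hC.mul_mem_L hf hg
  rwa [← Finsupp.single_add, ← Nat.cast_add] at this

theorem evL_injective (hC : IsProjCurve k F res ord ev L t) {O P : Pt}
    (hO : Module.finrank k (res O) = 1) (hP : P ≠ O) {n : ℕ} (hn : n < Module.finrank k (res P)) :
    Function.Injective (hC.evL hP n) := by
  rw [injective_iff_map_eq_zero]
  rintro ⟨f, hf⟩ h
  by_contra h0
  have h0 : f ≠ 0 := fun h => h0 (Subtype.ext h)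
  lift f to Fˣ using h0.isUnit
  exact hC.ev_unit_ne_zero (hC.ord_eq_zero_of_mem_lowUnits (hC.mem_lowUnits_of_mem_L hO hn hf)
    (not_isLow_finrank hP)) h

/-- Every unit of the residue field at `P` is a quotient of values of functions whose only pole
is at `O` and of small order. -/
theorem exists_ev_eq_mul (hC : IsProjCurve k F res ord ev L t) {O P : Pt}
    (hO : Module.finrank k (res O) = 1) (hP : P ≠ O)
    (ht : 3 * t + 1 ≤ Module.finrank k (res P)) {y : res P} (hy : y ≠ 0) :
    ∃ a b : Fˣ, (a : F) ∈ L (Finsupp.single O ((Module.finrank k (res P) - 1 : ℕ) : ℤ)) ∧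
      (b : F) ∈ L (Finsupp.single O ((2 * t : ℕ) : ℤ)) ∧ ev P (a : F) = y * ev P (b : F) := by
  have := hC.finiteDimensional_res
  have := hC.finiteDimensional_L
  have h₁ := hC.le_finrank_L hO (Module.finrank k (res P) - 1)
  have h₂ := hC.le_finrank_L hO (2 * t)
  have hker := LinearMap.ker_ne_bot_of_finrank_lt
    (f := (hC.evL hP (Module.finrank k (res P) - 1)).coprod
      (-(LinearMap.mulLeft k y ∘ₗ hC.evL hP (2 * t)))) (by
      rw [Module.finrank_prod]
      omega)
  obtain ⟨⟨a, b⟩, hab, hne⟩ := Submodule.exists_mem_ne_zero_of_ne_bot hker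
  have hinj₁ := (injective_iff_map_eq_zero _).1 (hC.evL_injective hO hP
    (n := Module.finrank k (res P) - 1) (by omega))
  have hinj₂ := (injective_iff_map_eq_zero _).1 (hC.evL_injective hO hP (n := 2 * t) (by omega))
  have heq : hC.evL hP _ a = y * hC.evL hP _ b := by
    simpa [← sub_eq_add_neg, sub_eq_zero] using hab
  have ha : a ≠ 0 := by
    rintro rfl
    have : b = 0 := hinj₂ b (by simpa [hy] using heq.symm)
    exact hne (by rw [this]; rfl)
  have hb : b ≠ 0 := by
    rintro rfl
    exact ha (hinj₁ a (by simpa using heq))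
  exact ⟨Units.mk0 a (by simpa using ha), Units.mk0 b (by simpa using hb), a.2, b.2, heq⟩

/-- Two units of the residue field at `P` are quotients of consecutive values in a chain of three
functions whose only pole is at `O` and of small order. -/
theorem exists_ev_chain (hC : IsProjCurve k F res ord ev L t) {O P : Pt}
    (hO : Module.finrank k (res O) = 1) (hP : P ≠ O)
    (ht : 3 * t + 1 ≤ Module.finrank k (res P)) {y z : res P} (hy : y ≠ 0) (hz : z ≠ 0) :
    ∃ a b c : Fˣ, (a : F) ∈ L (Finsupp.single O ((Module.finrank k (res P) - 1 : ℕ) : ℤ)) ∧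
      (b : F) ∈ L (Finsupp.single O ((Module.finrank k (res P) - 1 : ℕ) : ℤ)) ∧
      (c : F) ∈ L (Finsupp.single O ((Module.finrank k (res P) - 1 : ℕ) : ℤ)) ∧
      ev P (a : F) = y * ev P (b : F) ∧ ev P (b : F) = z * ev P (c : F) := by
  have := hC.finiteDimensional_res
  have := hC.finiteDimensional_L
  have h₁ := hC.le_finrank_L hO (Module.finrank k (res P) - 1)
  set V := L (Finsupp.single O ((Module.finrank k (res P) - 1 : ℕ) : ℤ))
  let φ : V →ₗ[k] res P := hC.evL hP _
  have hφ : ∀ a, φ a = 0 → a = 0 :=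
    (injective_iff_map_eq_zero _).1 (hC.evL_injective hO hP (by omega))
  have hker := LinearMap.ker_ne_bot_of_finrank_lt
    (f := ((φ.coprod ((-(LinearMap.mulLeft k y ∘ₗ φ)).coprod (0 : V →ₗ[k] res P))).prod
      ((0 : V →ₗ[k] res P).coprod (φ.coprod (-(LinearMap.mulLeft k z ∘ₗ φ)))))) (by
      simp only [Module.finrank_prod]
      omega)
  obtain ⟨⟨a, b, c⟩, habc, hne⟩ := Submodule.exists_mem_ne_zero_of_ne_bot hker
  have heq : φ a = y * φ b ∧ φ b = z * φ c := by
    simpa [← sub_eq_add_neg, sub_eq_zero] using habc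
  have hb : b ≠ 0 := by
    rintro rfl
    have ha : a = 0 := hφ a (by simpa using heq.1)
    have hc : c = 0 := hφ c (by simpa [hz] using heq.2.symm)
    exact hne (by rw [ha, hc]; rfl)
  have ha : a ≠ 0 := by
    rintro rfl
    exact hb (hφ b (by simpa [hy] using heq.1.symm))
  have hc : c ≠ 0 := by
    rintro rfl
    exact hb (hφ b (by simpa using heq.2))
  exact ⟨Units.mk0 a (by simpa using ha), Units.mk0 b (by simpa using hb),
    Units.mk0 c (by simpa using hc), a.2, b.2, c.2, heq.1, heq.2⟩

/-- A uniformizer at `P` whose other zeros and poles have smaller degree than `P`, or are `O`. -/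
structure IsLowUniformizer (hC : IsProjCurve k F res ord ev L t) (O P : Pt) (π : Fˣ) : Prop where
  ord_self : ord P (π : F) = 1
  isLow : ∀ Q, Q ≠ P → ord Q (π : F) ≠ 0 → IsLow k res O (Module.finrank k (res P)) Q
  mem_L : (π : F) ∈ L (Finsupp.single O ((Module.finrank k (res P) + t : ℕ) : ℤ))

theorem exists_isLowUniformizer (hC : IsProjCurve k F res ord ev L t) {O P : Pt}
    (hO : Module.finrank k (res O) = 1) (hP : P ≠ O) (ht : t < Module.finrank k (res P)) :
    ∃ π : Fˣ, hC.IsLowUniformizer O P π := by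
  obtain ⟨u, E, hE, hEt, hu⟩ := hC.exists_unit_dv_eq hO (Finsupp.single P 1)
  rw [divDeg_single, mul_one] at hu
  have hord : ∀ Q, ord Q (u : F) = Finsupp.single P 1 Q + E Q -
      Finsupp.single O (Module.finrank k (res P) + t : ℤ) Q := fun Q => by
    rw [← hC.dv_apply, hu]; rfl
  have hEQ : ∀ Q, E Q ≠ 0 → Module.finrank k (res Q) ≤ t := fun Q hQ => by
    have := finrank_le_divDeg (k := k) (res := res) hE hQ
    omega
  refine ⟨u, ?_, fun Q hQP hQ => ?_, ?_⟩
  · have hEP : E P = 0 := by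
      by_contra h
      have := hEQ P h
      omega
    rw [hord, hEP, Finsupp.single_eq_same, Finsupp.single_eq_of_ne hP]
    norm_num
  · by_cases hQO : Q = O
    · exact Or.inl hQO
    rw [hord, Finsupp.single_eq_of_ne hQO, Finsupp.single_eq_of_ne hQP] at hQ
    have := hEQ Q (by omega)
    exact Or.inr (by omega)
  · rw [hC.mem_L_unit, hu]
    push_cast
    rw [sub_add_cancel]
    exact add_nonneg (by simp) hE

/-- Two functions congruent modulo `P`, with poles only at `O` and of order less than
`2 * deg P`, differ by a multiple of the uniformizer with small cofactor. -/
theorem exists_sub_eq_mul (hC : IsProjCurve k F res ord ev L t) {O P : Pt}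
    (hO : Module.finrank k (res O) = 1) (hP : P ≠ O) {π : Fˣ} (hπ : hC.IsLowUniformizer O P π)
    {N : ℕ} (hN : N < 2 * Module.finrank k (res P)) {f g : Fˣ}
    (hf : (f : F) ∈ L (Finsupp.single O N)) (hg : (g : F) ∈ L (Finsupp.single O N))
    (hfg : ev P (f : F) = ev P (g : F)) (hne : f ≠ g) :
    ∃ u ∈ hC.lowUnits O (Module.finrank k (res P)), (f : F) - g = π * u := by
  have hw0 : (f : F) - g ≠ 0 := sub_ne_zero.2 fun h => hne (Units.ext h)
  have hwL : (f : F) - g ∈ L (Finsupp.single O (N : ℤ)) := sub_mem hf hg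
  have hev : ev P ((f : F) - g) = 0 := by
    have := map_sub (hC.evL hP N) ⟨f, hf⟩ ⟨g, hg⟩
    simp only [evL_apply, AddSubgroupClass.coe_sub] at this
    rw [this, hfg, sub_self]
  obtain ⟨w, hw⟩ : ∃ w : Fˣ, (w : F) = (f : F) - g := ⟨Units.mk0 _ hw0, rfl⟩
  rw [← hw] at hwL hev
  have hZ := hC.mem_L_unit.1 hwL
  have hordP : 0 < ord P (w : F) := by
    have : 0 ≤ (hC.dv w + Finsupp.single O (N : ℤ)) P := hZ P
    rw [Finsupp.add_apply, Finsupp.single_eq_of_ne hP, hC.dv_apply] at this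
    exact (hC.ev_eq_zero_iff P w w.ne_zero (by omega)).1 hev
  have hR : 0 ≤ hC.dv w + Finsupp.single O (N : ℤ) - Finsupp.single P (1 : ℤ) := by
    intro Q
    by_cases hQ : Q = P
    · simp only [hQ, Finsupp.coe_zero, Pi.zero_apply, Finsupp.coe_sub, Finsupp.coe_add,
        Pi.sub_apply, Pi.add_apply, Finsupp.single_eq_same, Finsupp.single_eq_of_ne hP,
        hC.dv_apply]
      omega
    · simpa [Finsupp.single_eq_of_ne hQ] using hZ Q
  have hlow : ∀ Q, (hC.dv w + Finsupp.single O (N : ℤ) - Finsupp.single P (1 : ℤ)) Q ≠ 0 →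
      Module.finrank k (res Q) < Module.finrank k (res P) := fun Q hQ => by
    have := finrank_le_divDeg (k := k) (res := res) hR hQ
    rw [divDeg_sub, divDeg_add, hC.divDeg_dv, divDeg_single, divDeg_single, hO] at this
    push_cast at this
    omega
  refine ⟨w * π⁻¹, fun Q hQ => ?_, by rw [← hw, ← Units.val_mul, mul_comm w, mul_inv_cancel_left]⟩
  by_cases hQO : Q = O
  · exact Or.inl hQO
  rw [hC.ord_unit_mul, hC.ord_unit_inv] at hQ
  have hQlow := hlow Q
  simp only [Finsupp.coe_sub, Finsupp.coe_add, Pi.sub_apply, Pi.add_apply,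
    Finsupp.single_eq_of_ne hQO, hC.dv_apply] at hQlow
  by_cases hQP : Q = P
  · subst hQP
    rw [Finsupp.single_eq_same] at hQlow
    rw [hπ.ord_self] at hQ
    exact Or.inr (hQlow (by omega))
  · rw [Finsupp.single_eq_of_ne hQP] at hQlow
    by_cases hπQ : ord Q (π : F) = 0
    · exact Or.inr (hQlow (by omega))
    · exact hπ.isLow Q hQP hπQ

theorem exists_symbol_div_eq (hC : IsProjCurve k F res ord ev L t) {O P : Pt}
    (hO : Module.finrank k (res O) = 1) (hP : P ≠ O) {π : Fˣ} (hπ : hC.IsLowUniformizer O P π)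
    {N : ℕ} (hN : N < 2 * Module.finrank k (res P)) {f g : Fˣ}
    (hf : (f : F) ∈ L (Finsupp.single O N)) (hg : (g : F) ∈ L (Finsupp.single O N))
    (hfg : ev P (f : F) = ev P (g : F))
    (hglow : g ∈ hC.lowUnits O (Module.finrank k (res P))) :
    ∃ v ∈ hC.lowUnits O (Module.finrank k (res P)), symbol (f / g) π = symbol (f / g) v := by
  by_cases hne : f = g
  · exact ⟨1, one_mem _, by rw [hne, div_self', symbol_one_left, symbol_one_left]⟩
  obtain ⟨u, hu, huv⟩ := hC.exists_sub_eq_mul hO hP hπ hN hf hg hfg hne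
  refine ⟨(-u / g)⁻¹, inv_mem (div_mem (hC.neg_mem_lowUnits hu) hglow), ?_⟩
  have hst : symbol (f / g) (π * (-u / g)) = 0 := symbol_eq_zero_of_add_eq_one (by
    have hg0 := g.ne_zero
    push_cast
    field_simp
    linear_combination huv)
  rw [symbol_mul_right] at hst
  rw [symbol_inv_right]
  exact eq_neg_of_add_eq_zero_left hst

/-- The units supported on points lower than `P` whose symbol with `π` is a sum of symbols of
such units. -/
def tameTrivialUnits (hC : IsProjCurve k F res ord ev L t) (O P : Pt) (π : Fˣ) :
    Subgroup Fˣ where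
  carrier := {h | h ∈ hC.lowUnits O (Module.finrank k (res P)) ∧
    symbol h π ∈ hC.lowSymbols O (Module.finrank k (res P))}
  one_mem' := ⟨one_mem _, by rw [symbol_one_left]; exact zero_mem _⟩
  mul_mem' hf hg := ⟨mul_mem hf.1 hg.1, by rw [symbol_mul_left]; exact add_mem hf.2 hg.2⟩
  inv_mem' hf := ⟨inv_mem hf.1, by rw [symbol_inv_left]; exact neg_mem hf.2⟩

theorem div_mem_tameTrivialUnits (hC : IsProjCurve k F res ord ev L t) {O P : Pt}
    (hO : Module.finrank k (res O) = 1) (hP : P ≠ O) {π : Fˣ} (hπ : hC.IsLowUniformizer O P π)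
    {N : ℕ} (hN : N < 2 * Module.finrank k (res P)) {f g : Fˣ}
    (hf : (f : F) ∈ L (Finsupp.single O N)) (hg : (g : F) ∈ L (Finsupp.single O N))
    (hfg : ev P (f : F) = ev P (g : F))
    (hflow : f ∈ hC.lowUnits O (Module.finrank k (res P)))
    (hglow : g ∈ hC.lowUnits O (Module.finrank k (res P))) :
    f / g ∈ hC.tameTrivialUnits O P π := by
  obtain ⟨v, hv, h⟩ := hC.exists_symbol_div_eq hO hP hπ hN hf hg hfg hglow
  refine ⟨div_mem hflow hglow, ?_⟩
  rw [h]
  exact hC.symbol_mem_lowSymbols (div_mem hflow hglow) hv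

/-- The unit `h` agrees, at `P` and up to `tameTrivialUnits`, with a quotient of functions with
poles only at `O` and of order less than the degree of `P`. -/
def IsSmallQuotient (hC : IsProjCurve k F res ord ev L t) (O P : Pt) (π h : Fˣ) : Prop :=
  h ∈ hC.lowUnits O (Module.finrank k (res P)) ∧
    ∃ a b : Fˣ, (a : F) ∈ L (Finsupp.single O ((Module.finrank k (res P) - 1 : ℕ) : ℤ)) ∧
      (b : F) ∈ L (Finsupp.single O ((Module.finrank k (res P) - 1 : ℕ) : ℤ)) ∧
      ev P (a : F) = ev P (h : F) * ev P (b : F) ∧ h * b / a ∈ hC.tameTrivialUnits O P π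

theorem IsSmallQuotient.mul_div_mem {hC : IsProjCurve k F res ord ev L t} {O P : Pt}
    (hO : Module.finrank k (res O) = 1) (hP : P ≠ O) {π : Fˣ} (hπ : hC.IsLowUniformizer O P π)
    {h : Fˣ} (hh : hC.IsSmallQuotient O P π h) {a b : Fˣ}
    (ha : (a : F) ∈ L (Finsupp.single O ((Module.finrank k (res P) - 1 : ℕ) : ℤ)))
    (hb : (b : F) ∈ L (Finsupp.single O ((Module.finrank k (res P) - 1 : ℕ) : ℤ)))
    (hab : ev P (a : F) = ev P (h : F) * ev P (b : F)) :
    h * b / a ∈ hC.tameTrivialUnits O P π := by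
  obtain ⟨-, c, d, hc, hd, hcd, hmem⟩ := hh
  have hpos := hC.finrank_pos P
  have hlow : ∀ {f : Fˣ}, (f : F) ∈ L (Finsupp.single O ((Module.finrank k (res P) - 1 : ℕ) : ℤ)) →
      f ∈ hC.lowUnits O (Module.finrank k (res P)) := fun hf =>
    hC.mem_lowUnits_of_mem_L hO (by omega) hf
  have hord : ∀ {f : Fˣ}, (f : F) ∈ L (Finsupp.single O ((Module.finrank k (res P) - 1 : ℕ) : ℤ)) →
      ord P (f : F) = 0 := fun hf =>
    hC.ord_eq_zero_of_mem_lowUnits (hlow hf) (not_isLow_finrank hP)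
  have key := hC.div_mem_tameTrivialUnits hO hP hπ
    (N := (Module.finrank k (res P) - 1) + (Module.finrank k (res P) - 1)) (by omega)
    (hC.mul_mem_L_single hc hb le_rfl) (hC.mul_mem_L_single hd ha le_rfl)
    (by rw [hC.ev_unit_mul (hord hc) (hord hb), hC.ev_unit_mul (hord hd) (hord ha), hab, hcd]
        ring)
    (mul_mem (hlow hc) (hlow hb)) (mul_mem (hlow hd) (hlow ha))
  convert mul_mem hmem key using 1
  rw [div_mul_div_comm, div_eq_div_iff_mul_eq_mul]
  ac_rfl

/-- The small quotients form a group. -/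
def smallQuotients (hC : IsProjCurve k F res ord ev L t) {O P : Pt}
    (hO : Module.finrank k (res O) = 1) (hP : P ≠ O)
    (ht : 3 * t + 1 ≤ Module.finrank k (res P)) {π : Fˣ} (hπ : hC.IsLowUniformizer O P π) :
    Subgroup Fˣ where
  carrier := {h | hC.IsSmallQuotient O P π h}
  one_mem' := ⟨one_mem _, 1, 1, hC.one_mem_L (by simp), hC.one_mem_L (by simp),
    by simp [hC.ev_one], by simp⟩
  mul_mem' {f g} hf hg := by
    have hf0 := hC.ord_eq_zero_of_mem_lowUnits hf.1 (not_isLow_finrank hP)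
    have hg0 := hC.ord_eq_zero_of_mem_lowUnits hg.1 (not_isLow_finrank hP)
    obtain ⟨a, b, c, ha, hb, hc, hab, hbc⟩ := hC.exists_ev_chain hO hP ht
      (hC.ev_unit_ne_zero hf0) (hC.ev_unit_ne_zero hg0)
    refine ⟨mul_mem hf.1 hg.1, a, c, ha, hc, ?_, ?_⟩
    · rw [hab, hbc, hC.ev_unit_mul hf0 hg0, mul_assoc]
    · convert mul_mem (hf.mul_div_mem hO hP hπ ha hb hab) (hg.mul_div_mem hO hP hπ hb hc hbc) using 1
      rw [div_mul_div_comm, div_eq_div_iff_mul_eq_mul]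
      ac_rfl
  inv_mem' {f} hf := by
    have hf0 := hC.ord_eq_zero_of_mem_lowUnits hf.1 (not_isLow_finrank hP)
    obtain ⟨hlow, a, b, ha, hb, hab, hmem⟩ := hf
    refine ⟨inv_mem hlow, b, a, hb, ha, ?_, ?_⟩
    · rw [hC.ev_unit_inv hf0, hab, inv_mul_cancel_left₀ (hC.ev_unit_ne_zero hf0)]
    · convert inv_mem hmem using 1
      rw [inv_div, div_eq_div_iff_mul_eq_mul, mul_comm f b, mul_comm f⁻¹ a, mul_assoc, mul_comm b f,
        inv_mul_cancel_left]

theorem mem_smallQuotients_of_le (hC : IsProjCurve k F res ord ev L t) {O P : Pt}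
    (hO : Module.finrank k (res O) = 1) (hP : P ≠ O)
    (ht : 3 * t + 1 ≤ Module.finrank k (res P)) {π : Fˣ} (hπ : hC.IsLowUniformizer O P π)
    {n : ℕ} (hn : n + 2 * t < 2 * Module.finrank k (res P)) {f : Fˣ}
    (hf : (f : F) ∈ L (Finsupp.single O n))
    (hflow : f ∈ hC.lowUnits O (Module.finrank k (res P))) :
    f ∈ hC.smallQuotients hO hP ht hπ := by
  have hf0 := hC.ord_eq_zero_of_mem_lowUnits hflow (not_isLow_finrank hP)
  obtain ⟨a, b, ha, hb, hab⟩ := hC.exists_ev_eq_mul hO hP ht (hC.ev_unit_ne_zero hf0)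
  have halow := hC.mem_lowUnits_of_mem_L hO (e := Module.finrank k (res P)) (by omega) ha
  have hblow := hC.mem_lowUnits_of_mem_L hO (e := Module.finrank k (res P)) (by omega) hb
  have hb0 := hC.ord_eq_zero_of_mem_lowUnits hblow (not_isLow_finrank hP)
  refine ⟨hflow, a, b, ha, hC.L_single_mono O (by omega) hb, hab, ?_⟩
  exact hC.div_mem_tameTrivialUnits hO hP hπ (N := 2 * Module.finrank k (res P) - 1) (by omega)
    (hC.mul_mem_L_single hf hb (by omega)) (hC.L_single_mono O (by omega) ha)
    (by rw [hC.ev_unit_mul hf0 hb0, hab]) (mul_mem hflow hblow) halow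

theorem isLow_of_finrank_le (O : Pt) {n e : ℕ} (h : n < e) {D : Pt →₀ ℤ} (hD : 0 ≤ D)
    (hDn : divDeg k res D = n) {Q : Pt} (hQ : D Q ≠ 0) : IsLow k res O e Q := by
  have := finrank_le_divDeg (k := k) (res := res) hD hQ
  exact Or.inr (by omega)

theorem mem_smallQuotients_of_mem_L (hC : IsProjCurve k F res ord ev L t) {O P : Pt}
    (hO : Module.finrank k (res O) = 1) (hP : P ≠ O)
    (ht : 3 * t + 1 ≤ Module.finrank k (res P)) {π : Fˣ} (hπ : hC.IsLowUniformizer O P π)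
    (n : ℕ) {f : Fˣ} (hf : (f : F) ∈ L (Finsupp.single O n))
    (hflow : f ∈ hC.lowUnits O (Module.finrank k (res P))) :
    f ∈ hC.smallQuotients hO hP ht hπ := by
  induction n using Nat.strong_induction_on generalizing f with
  | _ n ih =>
  by_cases hn : n + 2 * t < 2 * Module.finrank k (res P)
  · exact hC.mem_smallQuotients_of_le hO hP ht hπ hn hf hflow
  have hZ := hC.mem_L_unit.1 hf
  have hZdeg : divDeg k res (hC.dv f + Finsupp.single O (n : ℤ)) = n := by
    rw [divDeg_add, hC.divDeg_dv, divDeg_single, hO]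
    simp
  have hZlow : ∀ Q, (hC.dv f + Finsupp.single O (n : ℤ)) Q ≠ 0 →
      IsLow k res O (Module.finrank k (res P)) Q := fun Q hQ => by
    by_cases hQO : Q = O
    · exact Or.inl hQO
    · rw [Finsupp.add_apply, Finsupp.single_eq_of_ne hQO, add_zero] at hQ
      exact hflow Q hQ
  obtain ⟨A, hA, hAZ, hAt, hAe⟩ := exists_le_divDeg_mem_Ioc hC.finrank_pos
    (e := Module.finrank k (res P)) (t := t) (by omega) hZ (fun Q hQ => by
      rcases hZlow Q hQ with rfl | h
      · omega
      · omega) (by rw [hZdeg]; omega)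
  have hAlow : ∀ Q, A Q ≠ 0 → IsLow k res O (Module.finrank k (res P)) Q := fun Q hQ => by
    have h₁ : 0 ≤ A Q := hA Q
    have h₂ : A Q ≤ _ := hAZ Q
    exact hZlow Q (by omega)
  obtain ⟨a, ha⟩ : ∃ a : ℕ, divDeg k res A = a := ⟨(divDeg k res A).toNat, by omega⟩
  obtain ⟨u, E, hE, hEt, hu⟩ := hC.exists_unit_dv_eq hO A
  obtain ⟨v, E', hE', hE't, hv⟩ := hC.exists_unit_dv_eq hO E
  have hElow : ∀ Q, E Q ≠ 0 → IsLow k res O (Module.finrank k (res P)) Q := fun Q hQ =>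
    isLow_of_finrank_le O (by omega) hE hEt hQ
  have hE'low : ∀ Q, E' Q ≠ 0 → IsLow k res O (Module.finrank k (res P)) Q := fun Q hQ =>
    isLow_of_finrank_le O (by omega) hE' hE't hQ
  rw [ha] at hu hAt hAe
  rw [hEt] at hv
  have hulow : u ∈ hC.lowUnits O (Module.finrank k (res P)) := fun Q hQ => by
    by_cases hQO : Q = O
    · exact Or.inl hQO
    rw [← hC.dv_apply, hu, Finsupp.sub_apply, Finsupp.add_apply, Finsupp.single_eq_of_ne hQO] at hQ
    by_cases hAQ : A Q = 0
    · exact hElow Q (by omega)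
    · exact hAlow Q hAQ
  have hvlow : v ∈ hC.lowUnits O (Module.finrank k (res P)) := fun Q hQ => by
    by_cases hQO : Q = O
    · exact Or.inl hQO
    rw [← hC.dv_apply, hv, Finsupp.sub_apply, Finsupp.add_apply, Finsupp.single_eq_of_ne hQO] at hQ
    by_cases hEQ : E Q = 0
    · exact hE'low Q (by omega)
    · exact hElow Q hEQ
  have huL : (u : F) ∈ L (Finsupp.single O ((a + t : ℕ) : ℤ)) := by
    rw [hC.mem_L_unit, hu]
    push_cast
    rw [sub_add_cancel]
    exact add_nonneg hA hE
  have hvL : (v : F) ∈ L (Finsupp.single O ((t + t : ℕ) : ℤ)) := by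
    rw [hC.mem_L_unit, hv]
    push_cast
    rw [sub_add_cancel]
    exact add_nonneg hE hE'
  have hwL : ((f * v / u : Fˣ) : F) ∈ L (Finsupp.single O ((n - a + t : ℕ) : ℤ)) := by
    rw [hC.mem_L_unit]
    have hdv : hC.dv (f * v / u) + Finsupp.single O ((n - a + t : ℕ) : ℤ) =
        (hC.dv f + Finsupp.single O (n : ℤ) - A) + E' := by
      have h₁ : hC.dv (f * v / u) = hC.dv f + hC.dv v - hC.dv u := by
        ext Q
        simp only [Finsupp.coe_sub, Finsupp.coe_add, Pi.sub_apply, Pi.add_apply, hC.dv_apply,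
          div_eq_mul_inv, hC.ord_unit_mul, hC.ord_unit_inv]
        omega
      have h₂ : ((n - a + t : ℕ) : ℤ) = n - a + t := by omega
      rw [h₁, hu, hv, h₂]
      simp only [Finsupp.single_add, Finsupp.single_sub]
      abel
    rw [hdv]
    exact add_nonneg (sub_nonneg.2 hAZ) hE'
  have hu' := ih _ (by omega) huL hulow
  have hv' := ih _ (by omega) hvL hvlow
  have hw' := ih _ (by omega) hwL (div_mem (mul_mem hflow hvlow) hulow)
  convert div_mem (mul_mem hw' hu') hv' using 1
  rw [div_mul_cancel, mul_div_cancel_right]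

/-- A unit with value `1` at `P` and supported on lower points has trivial symbol with the
uniformizer at `P`, modulo symbols supported on lower points. -/
theorem symbol_mem_lowSymbols_of_ev_eq_one (hC : IsProjCurve k F res ord ev L t) {O P : Pt}
    (hO : Module.finrank k (res O) = 1) (hP : P ≠ O)
    (ht : 3 * t + 1 ≤ Module.finrank k (res P)) {π : Fˣ} (hπ : hC.IsLowUniformizer O P π)
    {h : Fˣ} (hh : h ∈ hC.lowUnits O (Module.finrank k (res P))) (h1 : ev P (h : F) = 1) :
    symbol h π ∈ hC.lowSymbols O (Module.finrank k (res P)) := by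
  let A : Pt →₀ ℤ := (hC.dv h).mapRange (fun n => max (-n) 0) (by simp)
  have hAQ : ∀ Q, A Q = max (-ord Q (h : F)) 0 := fun Q => rfl
  have hA : 0 ≤ A := fun Q => by rw [hAQ]; exact le_max_right _ _
  obtain ⟨u, E, hE, hEt, hu⟩ := hC.exists_unit_dv_eq hO A
  obtain ⟨a, ha⟩ : ∃ a : ℕ, divDeg k res A = a :=
    ⟨(divDeg k res A).toNat, (Int.toNat_of_nonneg (divDeg_nonneg hA)).symm⟩
  rw [ha] at hu
  have hulow : u ∈ hC.lowUnits O (Module.finrank k (res P)) := fun Q hQ => by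
    by_cases hQO : Q = O
    · exact Or.inl hQO
    rw [← hC.dv_apply, hu, Finsupp.sub_apply, Finsupp.add_apply, Finsupp.single_eq_of_ne hQO,
      hAQ] at hQ
    by_cases hEQ : E Q = 0
    · exact hh Q fun h0 => hQ (by simp [h0, hEQ])
    · exact isLow_of_finrank_le O (by omega) hE hEt hEQ
  have huL : (u : F) ∈ L (Finsupp.single O ((a + t : ℕ) : ℤ)) := by
    rw [hC.mem_L_unit, hu]
    push_cast
    rw [sub_add_cancel]
    exact add_nonneg hA hE
  have hhuL : ((h * u : Fˣ) : F) ∈ L (Finsupp.single O ((a + t : ℕ) : ℤ)) := by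
    rw [hC.mem_L_unit]
    intro Q
    have h₁ : ord Q (u : F) = (A + E - Finsupp.single O (a + t : ℤ)) Q := by rw [← hu]; rfl
    have h₂ : 0 ≤ E Q := hE Q
    have h₃ : -ord Q (h : F) ≤ A Q := by rw [hAQ]; exact le_max_left _ _
    simp only [Finsupp.coe_sub, Finsupp.coe_add, Pi.sub_apply, Pi.add_apply, Finsupp.coe_zero,
      Pi.zero_apply, hC.dv_apply, hC.ord_unit_mul, Nat.cast_add] at h₁ ⊢
    omega
  have hsmall : h ∈ hC.smallQuotients hO hP ht hπ := by
    convert div_mem (hC.mem_smallQuotients_of_mem_L hO hP ht hπ _ hhuL (mul_mem hh hulow))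
      (hC.mem_smallQuotients_of_mem_L hO hP ht hπ _ huL hulow) using 1
    rw [mul_div_cancel_right]
  have := IsSmallQuotient.mul_div_mem hO hP hπ hsmall (a := 1) (b := 1)
    (hC.one_mem_L (by simp)) (hC.one_mem_L (by simp)) (by simp [h1])
  rw [mul_one, div_one] at this
  exact this.2

theorem lowUnits_mono (hC : IsProjCurve k F res ord ev L t) (O : Pt) {n m : ℕ} (h : n ≤ m) :
    hC.lowUnits O n ≤ hC.lowUnits O m := fun _ hf P hP =>
  (hf P hP).imp_right fun h' => h'.trans_le h

theorem lowSymbols_mono (hC : IsProjCurve k F res ord ev L t) (O : Pt) {n m : ℕ} (h : n ≤ m) :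
    hC.lowSymbols O n ≤ hC.lowSymbols O m :=
  AddSubgroup.closure_mono fun _ ⟨f, hf, g, hg, hx⟩ =>
    ⟨f, hC.lowUnits_mono O h hf, g, hC.lowUnits_mono O h hg, hx⟩

theorem exists_mem_lowUnits (hC : IsProjCurve k F res ord ev L t) (O : Pt) (f : Fˣ) :
    ∃ n, f ∈ hC.lowUnits O n := by
  refine ⟨(hC.dv f).support.sup (fun P => Module.finrank k (res P)) + 1, fun P hP => Or.inr ?_⟩
  exact Nat.lt_succ_of_le (Finset.le_sup (f := fun P => Module.finrank k (res P))
    (Finsupp.mem_support_iff.2 hP))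

theorem exists_mem_lowSymbols (hC : IsProjCurve k F res ord ev L t) (O : Pt) (x : K2 F) :
    ∃ n, x ∈ hC.lowSymbols O n := by
  obtain ⟨x, rfl⟩ := Submodule.Quotient.mk_surjective _ x
  induction x using TensorProduct.induction_on with
  | zero => exact ⟨0, zero_mem _⟩
  | tmul f g =>
    obtain ⟨n, hn⟩ := hC.exists_mem_lowUnits O f.toMul
    obtain ⟨m, hm⟩ := hC.exists_mem_lowUnits O g.toMul
    exact ⟨max n m, hC.symbol_mem_lowSymbols (hC.lowUnits_mono O (le_max_left n m) hn)
      (hC.lowUnits_mono O (le_max_right n m) hm)⟩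
  | add x y hx hy =>
    obtain ⟨n, hn⟩ := hx
    obtain ⟨m, hm⟩ := hy
    exact ⟨max n m, add_mem (hC.lowSymbols_mono O (le_max_left n m) hn)
      (hC.lowSymbols_mono O (le_max_right n m) hm)⟩

section Tame

variable {T : K2 F →+ Π₀ P : Pt, Additive ((res P)ˣ)}

theorem tame_symbol_eq_zero (hC : IsProjCurve k F res ord ev L t) (hT : IsTameSymbol ord ev T)
    {f g : Fˣ} {P : Pt} (hf : ord P (f : F) = 0) (hg : ord P (g : F) = 0) :
    T (symbol f g) P = 0 := by
  have h := hT f g P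
  rw [hf, hg] at h
  simp only [mul_zero, zpow_zero, neg_zero, mul_one, Units.val_one, hC.ev_one] at h
  exact congrArg Additive.ofMul (Units.ext h)

theorem tame_symbol_uniformizer (hT : IsTameSymbol ord ev T)
    {f g : Fˣ} {P : Pt} (hf : ord P (f : F) = 0) (hg : ord P (g : F) = 1) :
    ((T (symbol f g) P).toMul : res P) = ev P (f : F) := by
  rw [hT f g P, hf, hg]
  simp

theorem tame_eq_zero_of_mem_lowSymbols (hC : IsProjCurve k F res ord ev L t)
    (hT : IsTameSymbol ord ev T) {O P : Pt} {n : ℕ} (hP : ¬ IsLow k res O n P) {x : K2 F}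
    (hx : x ∈ hC.lowSymbols O n) : T x P = 0 := by
  induction hx using AddSubgroup.closure_induction with
  | mem x hx =>
    obtain ⟨f, hf, g, hg, rfl⟩ := hx
    exact hC.tame_symbol_eq_zero hT (hC.ord_eq_zero_of_mem_lowUnits hf hP)
      (hC.ord_eq_zero_of_mem_lowUnits hg hP)
  | zero => simp
  | add x y _ _ hx hy => simp [hx, hy]
  | neg x _ hx => simp [hx]

end Tame

/-- The homomorphism `(h_P)_P ↦ ∑_P {h_P, π_P}`. -/
def symbolSum (π : Pt → Fˣ) : (Pt →₀ Additive Fˣ) →+ K2 F :=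
  Finsupp.liftAddHom fun P => AddMonoidHom.mk' (fun h => symbol h.toMul (π P)) fun f g => by
    rw [toMul_add, symbol_mul_left]

theorem symbolSum_single (π : Pt → Fˣ) (P : Pt) (h : Fˣ) :
    symbolSum π (Finsupp.single P (Additive.ofMul h)) = symbol h (π P) :=
  Finsupp.liftAddHom_apply_single _ _ _

theorem symbolSum_apply (π : Pt → Fˣ) (c : Pt →₀ Additive Fˣ) :
    symbolSum π c = ∑ P ∈ c.support, symbol (c P).toMul (π P) := by
  simp [symbolSum, Finsupp.sum]

/-- Families of units supported on points lower than degree `e`, indexed by the points of degree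
`e` other than `O`. -/
def coeffFamilies (hC : IsProjCurve k F res ord ev L t) (O : Pt) (e : ℕ) :
    AddSubgroup (Pt →₀ Additive Fˣ) where
  carrier := {c | ∀ P, (c P).toMul ∈ hC.lowUnits O e ∧
    (c P ≠ 0 → P ≠ O ∧ Module.finrank k (res P) = e)}
  zero_mem' P := ⟨one_mem (hC.lowUnits O e), fun h => absurd rfl h⟩
  add_mem' {c c'} hc hc' P := by
    refine ⟨mul_mem (hc P).1 (hc' P).1, fun h => ?_⟩
    by_cases h0 : c P = 0
    · exact (hc' P).2 (by simpa [h0] using h)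
    · exact (hc P).2 h0
  neg_mem' {c} hc P := ⟨inv_mem (hc P).1, fun h => (hc P).2 (by simpa using h)⟩

theorem single_mem_coeffFamilies (hC : IsProjCurve k F res ord ev L t) {O P : Pt} (hP : P ≠ O)
    {h : Fˣ} (hh : h ∈ hC.lowUnits O (Module.finrank k (res P))) :
    Finsupp.single P (Additive.ofMul h) ∈ hC.coeffFamilies O (Module.finrank k (res P)) := by
  classical
  intro Q
  by_cases hQ : Q = P
  · subst hQ
    rw [Finsupp.single_eq_same]
    exact ⟨hh, fun _ => ⟨hP, rfl⟩⟩
  · rw [Finsupp.single_eq_of_ne hQ]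
    exact ⟨one_mem (hC.lowUnits O _), fun h => absurd rfl h⟩

/-- The units supported on points of degree at most `e` are generated by those supported on lower
points and the uniformizers. -/
theorem lowUnits_succ_le_closure (hC : IsProjCurve k F res ord ev L t) {O : Pt} {e : ℕ}
    {π : Pt → Fˣ} (hπ : ∀ P, P ≠ O → Module.finrank k (res P) = e →
      hC.IsLowUniformizer O P (π P)) :
    hC.lowUnits O (e + 1) ≤ Subgroup.closure
      ((hC.lowUnits O e : Set Fˣ) ∪ {f | ∃ P, P ≠ O ∧ Module.finrank k (res P) = e ∧ f = π P}) := by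
  classical
  intro f hf
  set s := (hC.dv f).support.filter fun P => P ≠ O ∧ Module.finrank k (res P) = e
  have hprod : ∏ P ∈ s, π P ^ ord P (f : F) ∈ Subgroup.closure
      ((hC.lowUnits O e : Set Fˣ) ∪
        {f | ∃ P, P ≠ O ∧ Module.finrank k (res P) = e ∧ f = π P}) := by
    refine prod_mem fun P hP => zpow_mem (Subgroup.subset_closure ?_) _
    exact Or.inr ⟨P, (Finset.mem_filter.1 hP).2.1, (Finset.mem_filter.1 hP).2.2, rfl⟩
  have hrest : f / ∏ P ∈ s, π P ^ ord P (f : F) ∈ hC.lowUnits O e := by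
    intro Q hQ
    by_contra hlow
    have hQO : Q ≠ O := fun h => hlow (Or.inl h)
    rw [div_eq_mul_inv, hC.ord_unit_mul, hC.ord_unit_inv, hC.ord_unit_prod] at hQ
    simp only [hC.ord_unit_zpow] at hQ
    have hzero : ∀ P ∈ s, P ≠ Q → ord P (f : F) * ord Q (π P : F) = 0 := by
      intro P hP hPQ
      obtain ⟨-, hPO, hPe⟩ := Finset.mem_filter.1 hP
      rw [by_contra fun h => hlow (hPe ▸ (hπ P hPO hPe).isLow Q hPQ.symm h), mul_zero]
    by_cases hQs : Q ∈ s
    · obtain ⟨-, -, hQe⟩ := Finset.mem_filter.1 hQs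
      rw [Finset.sum_eq_single Q hzero (fun h => absurd hQs h), (hπ Q hQO hQe).ord_self] at hQ
      exact hQ (by ring)
    · rw [Finset.sum_eq_zero fun P hP => hzero P hP fun h => hQs (h ▸ hP)] at hQ
      have hfQ : ord Q (f : F) ≠ 0 := by simpa using hQ
      refine hQs (Finset.mem_filter.2 ⟨Finsupp.mem_support_iff.2 hfQ, hQO, ?_⟩)
      have h₁ := (hf Q hfQ).resolve_left hQO
      have h₂ : ¬ Module.finrank k (res Q) < e := fun h => hlow (Or.inr h)
      omega
  rw [← div_mul_cancel f (∏ P ∈ s, π P ^ ord P (f : F))]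
  exact mul_mem (Subgroup.subset_closure (Or.inl hrest)) hprod

theorem lowSymbols_succ_le (hC : IsProjCurve k F res ord ev L t) {O : Pt}
    (hO : Module.finrank k (res O) = 1) {e : ℕ} (ht : 3 * t + 1 ≤ e)
    {π : Pt → Fˣ} (hπ : ∀ P, P ≠ O → Module.finrank k (res P) = e →
      hC.IsLowUniformizer O P (π P)) :
    hC.lowSymbols O (e + 1) ≤
      hC.lowSymbols O e ⊔ (hC.coeffFamilies O e).map (symbolSum π) := by
  set X := hC.lowSymbols O e ⊔ (hC.coeffFamilies O e).map (symbolSum π)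
  have hlow : ∀ {f g : Fˣ}, f ∈ hC.lowUnits O e → g ∈ hC.lowUnits O e → symbol f g ∈ X :=
    fun hf hg => AddSubgroup.mem_sup_left (hC.symbol_mem_lowSymbols hf hg)
  have hmix : ∀ {h : Fˣ} {P : Pt}, h ∈ hC.lowUnits O e → P ≠ O → Module.finrank k (res P) = e →
      symbol h (π P) ∈ X := by
    rintro h P hh hP rfl
    exact AddSubgroup.mem_sup_right ⟨_, hC.single_mem_coeffFamilies hP hh, symbolSum_single π P h⟩
  have hmix' : ∀ {h : Fˣ} {P : Pt}, h ∈ hC.lowUnits O e → P ≠ O → Module.finrank k (res P) = e →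
      symbol (π P) h ∈ X := fun hh hP he => by
    rw [symbol_swap]
    exact neg_mem (hmix hh hP he)
  have hunif : ∀ {P Q : Pt}, P ≠ O → Module.finrank k (res P) = e → Q ≠ O →
      Module.finrank k (res Q) = e → symbol (π Q) (π P) ∈ X := by
    intro P Q hP hPe hQ hQe
    by_cases hPQ : P = Q
    · rw [hPQ, symbol_self]
      exact hmix' (hC.neg_one_mem_lowUnits O e) hQ hQe
    have hπP := hπ P hP hPe
    have hπQ := hπ Q hQ hQe
    have hord : ord P (π Q : F) = 0 := by_contra fun h =>
      not_isLow_finrank hP (by rw [hPe, ← hQe]; exact hπQ.isLow P hPQ h)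
    obtain ⟨a, b, ha, hb, hab⟩ := hC.exists_ev_eq_mul hO hP (by omega) (hC.ev_unit_ne_zero hord)
    have halow := hC.mem_lowUnits_of_mem_L hO (e := Module.finrank k (res P)) (by omega) ha
    have hblow := hC.mem_lowUnits_of_mem_L hO (e := Module.finrank k (res P)) (by omega) hb
    have hb0 := hC.ord_eq_zero_of_mem_lowUnits hblow (not_isLow_finrank hP)
    obtain ⟨v, hv, h⟩ := hC.exists_symbol_div_eq hO hP hπP
      (N := 2 * Module.finrank k (res P) - 1) (by omega)
      (hC.mul_mem_L_single hπQ.mem_L hb (by omega)) (hC.L_single_mono O (by omega) ha)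
      (by rw [hC.ev_unit_mul hord hb0, hab]) halow
    rw [hPe] at halow hblow hv
    have hba := div_mem hblow halow
    rw [mul_div_assoc, symbol_mul_left, symbol_mul_left] at h
    rw [eq_sub_of_add_eq h]
    exact sub_mem (add_mem (hmix' hv hQ hQe) (hlow hba hv)) (hmix hba hP hPe)
  refine (AddSubgroup.closure_le _).2 ?_
  rintro _ ⟨f, hf, g, hg, rfl⟩
  replace hf := hC.lowUnits_succ_le_closure hπ hf
  replace hg := hC.lowUnits_succ_le_closure hπ hg
  rw [SetLike.mem_coe]
  induction hf, hg using Subgroup.closure_induction₂ with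
  | mem f g hf hg =>
    rcases hf with hf | ⟨P, hP, hPe, rfl⟩ <;> rcases hg with hg | ⟨Q, hQ, hQe, rfl⟩
    · exact hlow hf hg
    · exact hmix hf hQ hQe
    · exact hmix' hg hP hPe
    · exact hunif hQ hQe hP hPe
  | one_left g _ => rw [symbol_one_left]; exact zero_mem _
  | one_right g _ => rw [symbol_one_right]; exact zero_mem _
  | mul_left f g h _ _ _ h₁ h₂ => rw [symbol_mul_left]; exact add_mem h₁ h₂
  | mul_right f g h _ _ _ h₁ h₂ => rw [symbol_mul_right]; exact add_mem h₁ h₂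
  | inv_left f g _ _ h => rw [symbol_inv_left]; exact neg_mem h
  | inv_right f g _ _ h => rw [symbol_inv_right]; exact neg_mem h

section Tame

variable {T : K2 F →+ Π₀ P : Pt, Additive ((res P)ˣ)}

/-- An element of `K₂` supported in degree at most `e` whose tame symbols in degree `e` vanish is
supported in degree less than `e`. -/
theorem mem_lowSymbols_of_mem_succ (hC : IsProjCurve k F res ord ev L t)
    (hT : IsTameSymbol ord ev T) {O : Pt} (hO : Module.finrank k (res O) = 1) {e : ℕ}
    (ht : 3 * t + 1 ≤ e) {x : K2 F} (hx : x ∈ hC.lowSymbols O (e + 1))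
    (hTx : ∀ P, P ≠ O → Module.finrank k (res P) = e → T x P = 0) :
    x ∈ hC.lowSymbols O e := by
  have hex : ∀ P, ∃ π : Fˣ, P ≠ O → Module.finrank k (res P) = e →
      hC.IsLowUniformizer O P π := fun P => by
    by_cases h : P ≠ O ∧ Module.finrank k (res P) = e
    · obtain ⟨π, hπ⟩ := hC.exists_isLowUniformizer hO h.1 (by omega)
      exact ⟨π, fun _ _ => hπ⟩
    · exact ⟨1, fun h₁ h₂ => absurd ⟨h₁, h₂⟩ h⟩
  choose π hπ using hex
  obtain ⟨y, hy, _, ⟨c, hc, rfl⟩, rfl⟩ :=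
    AddSubgroup.mem_sup.1 (hC.lowSymbols_succ_le hO ht hπ hx)
  refine add_mem hy ?_
  rw [symbolSum_apply]
  refine sum_mem fun P hP => ?_
  obtain ⟨hcP, hP'⟩ := hc P
  obtain ⟨hPO, hPe⟩ := hP' (Finsupp.mem_support_iff.1 hP)
  have hnot : ¬ IsLow k res O e P := hPe ▸ not_isLow_finrank hPO
  have hTP := hTx P hPO hPe
  rw [map_add, DFinsupp.add_apply, hC.tame_eq_zero_of_mem_lowSymbols hT hnot hy, zero_add,
    symbolSum_apply, map_sum, DFinsupp.finsetSum_apply, Finset.sum_eq_single P] at hTP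
  · have hev := tame_symbol_uniformizer hT (hC.ord_eq_zero_of_mem_lowUnits hcP hnot)
      (hπ P hPO hPe).ord_self
    rw [hTP] at hev
    subst hPe
    exact hC.symbol_mem_lowSymbols_of_ev_eq_one hO hPO ht (hπ P hPO rfl) hcP hev.symm
  · intro Q hQ hQP
    obtain ⟨hcQ, hQ'⟩ := hc Q
    obtain ⟨hQO, hQe⟩ := hQ' (Finsupp.mem_support_iff.1 hQ)
    refine hC.tame_symbol_eq_zero hT (hC.ord_eq_zero_of_mem_lowUnits hcQ hnot)
      (by_contra fun h => hnot ?_)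
    rw [← hQe]
    exact (hπ Q hQO hQe).isLow P hQP.symm h
  · exact fun h => absurd hP h

theorem mem_lowSymbols_iff (hC : IsProjCurve k F res ord ev L t)
    (hT : IsTameSymbol ord ev T) {O : Pt} (hO : Module.finrank k (res O) = 1) {d : ℕ}
    (ht : 3 * t + 1 ≤ d) (x : K2 F) :
    x ∈ hC.lowSymbols O d ↔ ∀ P, ¬ IsLow k res O d P → T x P = 0 := by
  refine ⟨fun hx P hP => hC.tame_eq_zero_of_mem_lowSymbols hT hP hx, fun hTx => ?_⟩
  obtain ⟨n, hn⟩ := hC.exists_mem_lowSymbols O x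
  replace hn : x ∈ hC.lowSymbols O (d + n) := hC.lowSymbols_mono O (by omega) hn
  induction n with
  | zero => exact hn
  | succ n ih =>
    exact ih (hC.mem_lowSymbols_of_mem_succ hT hO (by omega) hn fun P hPO hPe =>
      hTx P fun h => h.elim hPO (by omega))

/-- The families of residues that are tame symbols away from the low points. -/
def tameRange (k : Type*) [Field k] {F : Type*} [Field F] {Pt : Type*} {res : Pt → Type*}
    [∀ P, Field (res P)] [∀ P, Algebra k (res P)]
    (T : K2 F →+ Π₀ P : Pt, Additive ((res P)ˣ)) (O : Pt) (d : ℕ) :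
    AddSubgroup (Π₀ P : Pt, Additive ((res P)ˣ)) where
  carrier := {y | ∃ x, ∀ P, ¬ IsLow k res O d P → T x P = y P}
  zero_mem' := ⟨0, fun P _ => by rw [map_zero]⟩
  add_mem' := by
    rintro _ _ ⟨x, hx⟩ ⟨x', hx'⟩
    exact ⟨x + x', fun P hP => by
      rw [map_add, DFinsupp.add_apply, DFinsupp.add_apply, hx P hP, hx' P hP]⟩
  neg_mem' := by
    rintro _ ⟨x, hx⟩
    exact ⟨-x, fun P hP => by rw [map_neg, DFinsupp.neg_apply, DFinsupp.neg_apply, hx P hP]⟩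

theorem mem_tameRange_of_single {k F : Type*} [Field k] [Field F] {Pt : Type*} [DecidableEq Pt]
    {res : Pt → Type*} [∀ P, Field (res P)] [∀ P, Algebra k (res P)]
    {T : K2 F →+ Π₀ P : Pt, Additive ((res P)ˣ)} {O : Pt} {d : ℕ}
    (y : Π₀ P : Pt, Additive ((res P)ˣ))
    (h : ∀ P, y P ≠ 0 → DFinsupp.single P (y P) ∈ tameRange k T O d) :
    y ∈ tameRange k T O d := by
  classical
  rw [← DFinsupp.sum_single (f := y)]
  exact sum_mem fun P hP => h P (DFinsupp.mem_support_iff.1 hP)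

theorem single_mem_tameRange [DecidableEq Pt] (hC : IsProjCurve k F res ord ev L t)
    (hT : IsTameSymbol ord ev T) {O : Pt} (hO : Module.finrank k (res O) = 1) {d : ℕ}
    (ht : 3 * t + 1 ≤ d) (n : ℕ) (P : Pt) (hn : Module.finrank k (res P) = n)
    (y : Additive (res P)ˣ) : DFinsupp.single P y ∈ tameRange k T O d := by
  induction n using Nat.strong_induction_on generalizing P with
  | _ n ih =>
  by_cases hlow : IsLow k res O d P
  · refine ⟨0, fun Q hQ => ?_⟩
    have hPQ : P ≠ Q := fun h => hQ (h ▸ hlow)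
    rw [map_zero, DFinsupp.single_eq_of_ne hPQ.symm]
    rfl
  have hPO : P ≠ O := fun h => hlow (Or.inl h)
  have hdP : d ≤ Module.finrank k (res P) := not_lt.1 fun h => hlow (Or.inr h)
  have hnot : ¬ IsLow k res O (Module.finrank k (res P)) P := not_isLow_finrank hPO
  obtain ⟨π, hπ⟩ := hC.exists_isLowUniformizer hO hPO (by omega)
  obtain ⟨a, b, ha, hb, hab⟩ := hC.exists_ev_eq_mul hO hPO (by omega) y.toMul.ne_zero
  have halow := hC.mem_lowUnits_of_mem_L hO (e := Module.finrank k (res P)) (by omega) ha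
  have hblow := hC.mem_lowUnits_of_mem_L hO (e := Module.finrank k (res P)) (by omega) hb
  have hq := div_mem halow hblow
  have hb0 := hC.ord_eq_zero_of_mem_lowUnits hblow hnot
  have hq0 := hC.ord_eq_zero_of_mem_lowUnits hq hnot
  have hTP : T (symbol (a / b) π) P = y := by
    refine congrArg Additive.ofMul (a₂ := y.toMul) (Units.ext ?_)
    refine (tame_symbol_uniformizer hT hq0 hπ.ord_self).trans ?_
    have h := hC.ev_unit_mul hq0 hb0
    rw [div_mul_cancel, hab] at h
    exact (mul_right_cancel₀ (hC.ev_unit_ne_zero hb0) h).symm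
  have hdiff : T (symbol (a / b) π) - DFinsupp.single P y ∈ tameRange k T O d := by
    refine mem_tameRange_of_single _ fun Q hQ => ?_
    have hQP : Q ≠ P := by
      rintro rfl
      exact hQ (by rw [DFinsupp.sub_apply, hTP, DFinsupp.single_eq_same, sub_self])
    rw [DFinsupp.sub_apply, DFinsupp.single_eq_of_ne hQP, sub_zero] at hQ
    have hQlow : IsLow k res O (Module.finrank k (res P)) Q := by_contra fun h =>
      hQ (hC.tame_symbol_eq_zero hT (hC.ord_eq_zero_of_mem_lowUnits hq h)
        (by_contra fun h' => h (hπ.isLow Q hQP h')))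
    rcases hQlow with rfl | hlt
    · refine ⟨0, fun R hR => ?_⟩
      rw [map_zero, DFinsupp.single_eq_of_ne fun h => hR (Or.inl h)]
      rfl
    · exact ih _ (by omega) Q rfl _
  have hmem : T (symbol (a / b) π) ∈ tameRange k T O d := ⟨_, fun _ _ => rfl⟩
  rw [← sub_sub_cancel (T (symbol (a / b) π)) (DFinsupp.single P y)]
  exact sub_mem hmem hdiff

end Tame

theorem Fsub_eq_lowSymbols (hC : IsProjCurve k F res ord ev L t) {O : Pt}
    (hO : Module.finrank k (res O) = 1) {d : ℕ} (hd : 1 ≤ d) :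
    Fsub k res ord (d - 1) = hC.lowSymbols O d := by
  have key : ∀ f : Fˣ, (∀ P, ord P (f : F) ≠ 0 → Module.finrank k (res P) ≤ d - 1) ↔
      f ∈ hC.lowUnits O d := by
    refine fun f => ⟨fun h P hP => Or.inr (by have := h P hP; omega), fun h P hP => ?_⟩
    rcases h P hP with rfl | h'
    · by_contra hlt
      have hord : ∀ Q, Q ≠ P → ord Q (f : F) = 0 := fun Q hQ => by_contra fun h0 => by
        have := (h Q h0).resolve_left hQ
        have := hC.finrank_pos Q
        omega
      have hdeg := hC.degree_formula f f.ne_zero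
      rw [finsum_eq_single _ P fun Q hQ => by rw [hord Q hQ, mul_zero], hO] at hdeg
      exact hP (by simpa using hdeg)
    · omega
  simp only [Fsub, lowSymbols, key]
  congr 1
  ext x
  simp only [Set.mem_ofPred_eq]
  constructor
  · rintro ⟨f, g, hf, hg, rfl⟩
    exact ⟨f, hf, g, hg, rfl⟩
  · rintro ⟨f, hf, g, hg, rfl⟩
    exact ⟨f, g, hf, hg, rfl⟩

end IsProjCurve

end Curve

/-- second isomorphism of Theorem `introker1`.  Let `C` be a regular,
irreducible curve, projective over `k`, with function field `F`, arithmetic genus `t`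
and a `k`-rational point `O`.  For every `d ≥ 3t + 1` the tame symbol induces an
isomorphism `K₂(F) / F_{d-1} ≅ ∐_{O ≠ P ∈ C_{≥ d}} k(P)^*`; this is expressed by
saying that the induced map `K₂(F) → ∐_{O ≠ P ∈ C_{≥ d}} k(P)^*` is surjective and
has kernel `F_{d-1}`. -/
theorem statement3 (k F : Type*) [Field k] [Field F] [Algebra k F]
    {Pt : Type*} (res : Pt → Type*) [∀ P, Field (res P)] [∀ P, Algebra k (res P)]
    (ord : Pt → F → ℤ) (ev : ∀ P, F → res P)
    (L : (Pt →₀ ℤ) → Submodule k F) (t : ℕ)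
    (hC : IsProjCurve k F res ord ev L t)
    (O : Pt) (hO : Module.finrank k (res O) = 1)
    (T : K2 F →+ Π₀ P : Pt, Additive ((res P)ˣ)) (hT : IsTameSymbol ord ev T)
    (d : ℕ) (hd : 3 * t + 1 ≤ d) :
    (∀ y : Π₀ P : Pt, Additive ((res P)ˣ),
      ∃ x : K2 F,
        ∀ P, P ≠ O → d ≤ Module.finrank k (res P) → T x P = y P) ∧
    (∀ x : K2 F,
      ((∀ P, P ≠ O → d ≤ Module.finrank k (res P) → T x P = 0) ↔
        x ∈ Fsub k res ord (d - 1))) := by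
  classical
  have hlow : ∀ P, ¬ IsLow k res O d P ↔ P ≠ O ∧ d ≤ Module.finrank k (res P) := fun P => by
    rw [IsLow, not_or, not_lt]
  refine ⟨fun y => ?_, fun x => ?_⟩
  · obtain ⟨x, hx⟩ := IsProjCurve.mem_tameRange_of_single y fun P _ =>
      hC.single_mem_tameRange hT hO hd _ P rfl (y P)
    exact ⟨x, fun P hP hPd => hx P ((hlow P).2 ⟨hP, hPd⟩)⟩
  · rw [hC.Fsub_eq_lowSymbols hO (by omega), hC.mem_lowSymbols_iff hT hO hd]
    exact ⟨fun h P hP => h P ((hlow P).1 hP).1 ((hlow P).1 hP).2,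
      fun h P hP hPd => h P ((hlow P).2 ⟨hP, hPd⟩)⟩

end
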